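/- arXiv:0809.0105 — 15 statements merged into one kernel-verified Lean document; each statement's English description precedes it below -/
import Mathlib

section
/- Let A be a set of elements of a type α such that every injective map from A to A is surjective (i.e., A is tame), and let b be an element not in A. Then every injective map from A ∪ {b} to A ∪ {b} is surjective; that is, A ∪ {b} is also tame. -/
/-- A set `A` is *tame* if every injective map from `A` to itself is surjective.
If `A` is tame and `b ∉ A`, then `A ∪ {b}` is tame. -/
theorem tame_insert {α : Type*} (A : Set α)
    (hA : ∀ g : A → A, Function.Injective g → Function.Surjective g)
    (b : α) (hb : b ∉ A) :
    ∀ g : (A ∪ {b} : Set α) → (A ∪ {b} : Set α),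
      Function.Injective g → Function.Surjective g := by
  classical
  intro g hg
  let bElt : (A ∪ {b} : Set α) := ⟨b, Or.inr rfl⟩
  -- Following `g` by the transposition of `g b` and `b` gives an injective map `h` fixing `b`;
  -- it therefore restricts to `A`, and it is surjective exactly when `g` is.
  let e : Equiv.Perm (A ∪ {b} : Set α) := Equiv.swap (g bElt) bElt
  let h := e ∘ g
  have h_inj : Function.Injective h := e.injective.comp hg
  have h_fix : h bElt = bElt := Equiv.swap_apply_left _ _
  have h_mem (a : A) : (h ⟨a, Or.inl a.2⟩ : α) ∈ A := by
    refine (h ⟨a, Or.inl a.2⟩).2.resolve_right fun hab => hb ?_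
    have habE : h ⟨a, Or.inl a.2⟩ = h bElt := by
      rw [h_fix]
      exact Subtype.ext hab
    have : (a : α) = b := congrArg Subtype.val (h_inj habE)
    exact this ▸ a.2
  have h_surjA : Function.Surjective fun a : A => (⟨h ⟨a, Or.inl a.2⟩, h_mem a⟩ : A) := by
    refine hA _ fun x y hxy => ?_
    have hxy' : h ⟨x, Or.inl x.2⟩ = h ⟨y, Or.inl y.2⟩ := Subtype.ext (Subtype.mk.inj hxy)
    exact Subtype.ext (Subtype.mk.inj (h_inj hxy'))
  have h_surj : Function.Surjective h := by
    rintro ⟨y, hy | rfl⟩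
    · obtain ⟨a, ha⟩ := h_surjA ⟨y, hy⟩
      exact ⟨⟨a, Or.inl a.2⟩, Subtype.ext (congrArg Subtype.val ha :)⟩
    · exact ⟨bElt, h_fix⟩
  exact (e.comp_surjective g).mp h_surj
end

section
/- Let (X, f, x₀) be a counting system and # the unique iterator for (X, f, x₀) on a type α. If A and B are finite sets (A, B : Finset α) and there exists a bijection between A and B, then #(A) = #(B). -/
/-- If `it` is the iterator for a counting system `(X, f, x₀)` on `α`, and `A`, `B` are
finite sets with a bijection between them, then `it A = it B`. -/
theorem iterator_eq_of_equiv {X : Type*} (f : X → X) (x₀ : X)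
    {α : Type*} [DecidableEq α] (it : Finset α → X)
    (h0 : it ∅ = x₀)
    (h1 : ∀ (A : Finset α) (a : α), a ∉ A → it (insert a A) = f (it A))
    (A B : Finset α) (h : Nonempty (A ≃ B)) : it A = it B := by
  -- The iterator depends on a set only through its cardinality.
  have key : ∀ S : Finset α, it S = f^[S.card] x₀ := by
    intro S
    induction S using Finset.induction_on with
    | empty => simp [h0]
    | insert a S ha ih =>
      rw [h1 S a ha, Finset.card_insert_of_notMem ha, Function.iterate_succ_apply', ih]
  obtain ⟨e⟩ := h
  rw [key A, key B, Finset.card_eq_of_equiv e]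
end

section
/- Let (X, f, x₀) be a standard counting system (f injective and x₀ not in the range of f) and # the unique iterator for (X, f, x₀) on a type α. Then # is complete: for all finite sets A, B : Finset α with #(B) = #(A), there exists a bijection between A and B. -/
/-- If the counting system `(X, f, x₀)` is standard (`f` injective and `x₀` not in the
range of `f`), then its unique iterator on `α` is complete: whenever `it B = it A`
there is a bijection between `A` and `B`. -/
theorem iterator_complete_of_standard {X : Type*} (f : X → X) (x₀ : X)
    (hinj : Function.Injective f) (hx₀ : x₀ ∉ Set.range f)
    {α : Type*} [DecidableEq α] (it : Finset α → X)
    (h0 : it ∅ = x₀)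
    (h1 : ∀ (A : Finset α) (a : α), a ∉ A → it (insert a A) = f (it A)) :
    ∀ A B : Finset α, it B = it A → Nonempty (A ≃ B) := by
  intro A B h
  suffices hcard : A.card = B.card from ⟨Finset.equivOfCardEq hcard⟩
  -- Induct on `A`, peeling one element off `B` at each step: injectivity of `f` cancels the
  -- two outer applications, and `x₀ ∉ range f` rules out that only one of the sets is empty.
  induction A using Finset.induction_on generalizing B with
  | empty =>
    induction B using Finset.induction_on with
    | empty => rfl
    | insert b B hb _ => exact absurd ⟨it B, by rw [← h1 B b hb, h, h0]⟩ hx₀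
  | insert a A ha ih =>
    induction B using Finset.induction_on with
    | empty => exact absurd ⟨it A, by rw [← h1 A a ha, ← h, h0]⟩ hx₀
    | insert b B hb _ =>
      rw [h1 A a ha, h1 B b hb] at h
      rw [Finset.card_insert_of_notMem ha, Finset.card_insert_of_notMem hb, ih B (hinj h)]
end

section
/- (Recursion theorem) If (X, f, x₀) is a Dedekind system, then for every counting system (Y, g, y₀) there exists a unique mapping h : X → Y with h(x₀) = y₀ such that h ∘ f = g ∘ h. -/
/-!
The map `h` is built from its graph, the smallest relation containing `(x₀, y₀)` and closed under
`(x, y) ↦ (f x, g y)`. By minimality of `(X, f, x₀)` it suffices to check that the set of `x`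
related to exactly one `y` contains `x₀` and is `f`-invariant; standardness guarantees that a pair
over `x₀` is `(x₀, y₀)`, and that a pair over `f x` comes from a pair over `x`. Uniqueness of `h`
is minimality applied to the set where two solutions agree.
-/

/-- The smallest relation between `X` and `Y` containing `(x₀, y₀)` and closed under
`(x, y) ↦ (f x, g y)`. -/
inductive RecGraph {X : Type*} {Y : Type*} (f : X → X) (x₀ : X) (g : Y → Y) (y₀ : Y) :
    X → Y → Prop
  | base : RecGraph f x₀ g y₀ x₀ y₀
  | step {x : X} {y : Y} : RecGraph f x₀ g y₀ x y → RecGraph f x₀ g y₀ (f x) (g y)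

theorem RecGraph.eq_or_exists {X : Type*} {Y : Type*} {f : X → X} {x₀ : X} {g : Y → Y} {y₀ : Y}
    {a : X} {b : Y} (h : RecGraph f x₀ g y₀ a b) :
    (a = x₀ ∧ b = y₀) ∨ ∃ x y, RecGraph f x₀ g y₀ x y ∧ a = f x ∧ b = g y := by
  cases h with
  | base => exact Or.inl ⟨rfl, rfl⟩
  | step h => exact Or.inr ⟨_, _, h, rfl, rfl⟩

/-- Recursion theorem: if `(X, f, x₀)` is a Dedekind system (minimal and standard),
then for every counting system `(Y, g, y₀)` there exists a unique map `h : X → Y` with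
`h x₀ = y₀` and `h ∘ f = g ∘ h`. -/
theorem recursion_theorem {X : Type*} (f : X → X) (x₀ : X)
    (hmin : ∀ S : Set X, x₀ ∈ S → (∀ x ∈ S, f x ∈ S) → S = Set.univ)
    (hinj : Function.Injective f) (hx₀ : x₀ ∉ Set.range f)
    {Y : Type*} (g : Y → Y) (y₀ : Y) :
    ∃! h : X → Y, h x₀ = y₀ ∧ h ∘ f = g ∘ h := by
  have functional : {x | ∃ y, RecGraph f x₀ g y₀ x y ∧ ∀ z, RecGraph f x₀ g y₀ x z → z = y}
      = Set.univ := by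
    apply hmin
    · refine ⟨y₀, .base, fun z hz => ?_⟩
      rcases hz.eq_or_exists with ⟨-, h⟩ | ⟨x, y, -, hx, -⟩
      · exact h
      · exact absurd ⟨x, hx.symm⟩ hx₀
    · rintro x ⟨y, hy, huniq⟩
      refine ⟨g y, .step hy, fun z hz => ?_⟩
      rcases hz.eq_or_exists with ⟨hx, -⟩ | ⟨x', y', h', hx, rfl⟩
      · exact absurd ⟨x, hx⟩ hx₀
      · obtain rfl := hinj hx
        rw [huniq y' h']
  choose h hgraph huniq using Set.eq_univ_iff_forall.mp functional
  refine ⟨h, ⟨(huniq _ _ .base).symm, funext fun x => (huniq _ _ (.step (hgraph x))).symm⟩, ?_⟩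
  rintro k ⟨hk₀, hk⟩
  have agree : {x | k x = h x} = Set.univ := by
    apply hmin
    · exact hk₀.trans (huniq _ _ .base)
    · intro x hx
      change k x = h x at hx
      calc k (f x) = g (k x) := congrFun hk x
        _ = g (h x) := by rw [hx]
        _ = h (f x) := huniq _ _ (.step (hgraph x))
  exact funext (Set.eq_univ_iff_forall.mp agree)
end

section
/- Let (X, f, x₀) be a Dedekind system. Then there exists a unique mapping F : X → Finset X with F(x₀) = ∅ and F(f(x)) = F(x) ∪ {x} for all x ∈ X. Moreover, x ∉ F(x) for every x ∈ X, and if # is the unique iterator for (X, f, x₀) on X itself, then for every finite set A : Finset X there is a bijection between A and F(#(A)). -/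
/-!
Minimality is the induction principle on `X`, and it gives uniqueness of `F` at once. For
existence, the orbit map `n ↦ f^[n] x₀` is a bijection `ℕ → X` (injective because the system is
standard, surjective because it is minimal), so `F` can be taken as the image of
`Finset.range n` at the `n`-th point of the orbit.

For `x ∉ F x`, the key fact is that `F x` is closed under predecessors: `f y ∈ F x` implies
`y ∈ F x`. Hence `f x ∈ F (f x) = insert x (F x)` would give `x ∈ F x` in either case.
It follows that `F (f x)` has exactly one more element than `F x`, so `A` and `F (it A)` have the
same cardinality by induction on `A`.
-/

/-- The orbit map of a standard counting system is injective. -/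
lemma orbit_injective {X : Type*} (f : X → X) (x₀ : X)
    (hinj : Function.Injective f) (hx₀ : x₀ ∉ Set.range f) :
    Function.Injective (fun n : ℕ => f^[n] x₀) := by
  intro m
  induction m with
  | zero =>
    intro n h
    cases n with
    | zero => rfl
    | succ n =>
      simp only [Function.iterate_succ_apply', Function.iterate_zero, id] at h
      exact absurd ⟨_, h.symm⟩ hx₀
  | succ m ih =>
    intro n h
    cases n with
    | zero =>
      simp only [Function.iterate_succ_apply', Function.iterate_zero, id] at h
      exact absurd ⟨_, h⟩ hx₀
    | succ n =>
      simp only [Function.iterate_succ_apply'] at h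
      exact congrArg Nat.succ (ih (hinj h))

/-- Let `(X, f, x₀)` be a Dedekind system. There exists a unique map
`F : X → Finset X` with `F x₀ = ∅` and `F (f x) = F x ∪ {x}` for all `x`. Moreover
any such `F` satisfies `x ∉ F x` for all `x`, and if `it` is the unique iterator for
`(X, f, x₀)` on `X` itself, then every finite set `A : Finset X` is in bijection with
`F (it A)`. -/
theorem dedekind_initial_segments {X : Type*} [DecidableEq X] (f : X → X) (x₀ : X)
    (hmin : ∀ S : Set X, x₀ ∈ S → (∀ x ∈ S, f x ∈ S) → S = Set.univ)
    (hinj : Function.Injective f) (hx₀ : x₀ ∉ Set.range f) :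
    (∃! F : X → Finset X, F x₀ = ∅ ∧ ∀ x : X, F (f x) = insert x (F x)) ∧
      ∀ F : X → Finset X, (F x₀ = ∅ ∧ ∀ x : X, F (f x) = insert x (F x)) →
        (∀ x : X, x ∉ F x) ∧
        ∀ it : Finset X → X,
          (it ∅ = x₀ ∧ ∀ (A : Finset X) (a : X), a ∉ A → it (insert a A) = f (it A)) →
          ∀ A : Finset X, Nonempty (A ≃ F (it A)) := by
  have ind : ∀ P : X → Prop, P x₀ → (∀ x, P x → P (f x)) → ∀ x, P x := by
    intro P h0 hs x
    have h := hmin {x | P x} h0 hs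
    exact (Set.ext_iff.mp h x).mpr trivial
  refine ⟨?_, ?_⟩
  · have hg := orbit_injective f x₀ hinj hx₀
    have hsurj : ∀ x, ∃ n : ℕ, f^[n] x₀ = x := by
      refine ind _ ⟨0, rfl⟩ ?_
      rintro x ⟨n, rfl⟩
      exact ⟨n + 1, Function.iterate_succ_apply' f n x₀⟩
    choose idx hidx using hsurj
    have hidx0 : idx x₀ = 0 := hg (hidx x₀)
    have hidxs : ∀ x, idx (f x) = idx x + 1 := by
      intro x
      apply hg
      simp only [Function.iterate_succ_apply', hidx]
    refine ⟨fun x => (Finset.range (idx x)).image (fun n => f^[n] x₀), ⟨?_, ?_⟩, ?_⟩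
    · simp [hidx0]
    · intro x
      simp only [hidxs, Finset.range_add_one, Finset.image_insert, hidx]
    · rintro G ⟨hG0, hGs⟩
      funext x
      revert x
      refine ind _ ?_ ?_
      · simp [hidx0, hG0]
      · intro x ih
        simp only [hidxs, Finset.range_add_one, Finset.image_insert, hidx, hGs, ih]
  · rintro F ⟨hF0, hFs⟩
    have hpred : ∀ x, ∀ y, f y ∈ F x → y ∈ F x := by
      refine ind _ (by simp [hF0]) ?_
      intro x ih y hy
      rw [hFs, Finset.mem_insert] at hy ⊢
      rcases hy with rfl | hy
      · right
        rw [hFs]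
        exact Finset.mem_insert_self _ _
      · exact Or.inr (ih y hy)
    have hnot : ∀ x, x ∉ F x := by
      refine ind _ (by simp [hF0]) ?_
      intro x ih hx
      rw [hFs, Finset.mem_insert] at hx
      rcases hx with hx | hx
      -- If `f x = x`, then `F x = F (f x)` contains `x`.
      · apply ih
        have h := Finset.mem_insert_self x (F x)
        rwa [← hFs, hx] at h
      · exact ih (hpred x x hx)
    refine ⟨hnot, ?_⟩
    rintro it ⟨h0, hs⟩ A
    refine ⟨Finset.equivOfCardEq ?_⟩
    induction A using Finset.induction_on with
    | empty => simp [h0, hF0]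
    | insert a A ha ih =>
      rw [hs A a ha, hFs, Finset.card_insert_of_notMem ha,
        Finset.card_insert_of_notMem (hnot _), ih]
end

section
/- (Lawvere) Let (X, f, x₀) be a counting system (with X in universe u) which is initial: for every type Y (in universe u), every g : Y → Y and every y₀ : Y there exists a unique mapping h : X → Y with h(x₀) = y₀ and h ∘ f = g ∘ h. Then (X, f, x₀) is a Dedekind system: it is minimal, f is injective, and x₀ is not in the range of f. -/
/-!
Initiality forces every endomorphism of `(X, f, x₀)` to be the identity.

* Minimality: for an invariant `S ∋ x₀`, the morphism `X → S` followed by the inclusion `S → X`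
  is an endomorphism, hence the identity, so every point lies in `S`.
* Standardness (Lambek's lemma for the functor `Option`): the map `[x₀, f] : Option X → X` is a
  morphism from the counting system `(Option X, some ∘ [x₀, f], none)`. The morphism
  `h : X → Option X` is therefore a section of `[x₀, f]`, which gives `h (f x) = some x`, while
  `h x₀ = none`.
-/

universe u

/-- (Lawvere) An initial counting system `(X, f, x₀)` — one admitting a unique morphism
to every counting system `(Y, g, y₀)` — is a Dedekind system: it is minimal, `f` is
injective, and `x₀` is not in the range of `f`. -/
theorem initial_is_dedekind {X : Type u} (f : X → X) (x₀ : X)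
    (hinit : ∀ (Y : Type u) (g : Y → Y) (y₀ : Y),
      ∃! h : X → Y, h x₀ = y₀ ∧ h ∘ f = g ∘ h) :
    (∀ S : Set X, x₀ ∈ S → (∀ x ∈ S, f x ∈ S) → S = Set.univ) ∧
      Function.Injective f ∧ x₀ ∉ Set.range f := by
  have endo_id : ∀ k : X → X, k x₀ = x₀ → (∀ x, k (f x) = f (k x)) → ∀ x, k x = x := by
    intro k hk₀ hk x
    exact congrFun ((hinit X f x₀).unique (y₁ := k) (y₂ := id) ⟨hk₀, funext hk⟩ ⟨rfl, rfl⟩) x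
  refine ⟨?_, ?_⟩
  · intro S hS₀ hS
    obtain ⟨h, ⟨h₀, hf⟩, -⟩ := hinit S (fun s => ⟨f s, hS s s.2⟩) ⟨x₀, hS₀⟩
    have hid := endo_id (fun x => (h x : X)) (congrArg Subtype.val h₀)
      (fun x => congrArg Subtype.val (congrFun hf x))
    exact Set.eq_univ_of_forall fun x => hid x ▸ (h x).2
  · obtain ⟨h, ⟨h₀, hf⟩, -⟩ := hinit (Option X) (fun o => some (o.elim x₀ f)) none
    have hf' : ∀ x, h (f x) = some ((h x).elim x₀ f) := congrFun hf
    have hid := endo_id (fun x => (h x).elim x₀ f) (by simp [h₀]) (fun x => by simp [hf'])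
    have hpred : ∀ x, h (f x) = some x := fun x => (hf' x).trans (congrArg some (hid x))
    refine ⟨fun a b hab => ?_, ?_⟩
    · exact Option.some.inj ((hpred a).symm.trans ((congrArg h hab).trans (hpred b)))
    · rintro ⟨x, hx⟩
      have hsome := hpred x
      rw [hx, h₀] at hsome
      cases hsome
end

section
/- Let (X, f, x₀) be a minimal counting system, α an infinite type, and # the unique iterator for (X, f, x₀) on α. Then the following are equivalent: (1) (X, f, x₀) is standard; (2) the iterator # is complete; (3) every finite set is #-regular, i.e., for every A : Finset α and every proper subset B ⊊ A one has #(B) ≠ #(A); (4) X is not a finite type. -/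
/-!
By induction, `it A = f^[A.card] x₀`, and minimality says that the orbit map `n ↦ f^[n] x₀` is
onto `X`. Each of the four conditions is equivalent to injectivity of the orbit map: standardness
by cancelling `f`; completeness and regularity because an infinite type has finite subsets of every
cardinality; and infinitude because a coincidence `f^[m] x₀ = f^[n] x₀` with `m < n` makes the
finite set `{f^[k] x₀ | k < n}` invariant, hence all of `X`.
-/

theorem orbit_surjective {X : Type*} (f : X → X) (x₀ : X)
    (hmin : ∀ S : Set X, x₀ ∈ S → (∀ x ∈ S, f x ∈ S) → S = Set.univ) :
    Function.Surjective (fun n : ℕ => f^[n] x₀) := by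
  rw [← Set.range_eq_univ]
  apply hmin
  · exact ⟨0, rfl⟩
  · rintro _ ⟨n, rfl⟩
    exact ⟨n + 1, Function.iterate_succ_apply' f n x₀⟩

theorem iterator_eq_iterate_card {X : Type*} (f : X → X) (x₀ : X)
    {α : Type*} [DecidableEq α] (it : Finset α → X) (h0 : it ∅ = x₀)
    (h1 : ∀ (A : Finset α) (a : α), a ∉ A → it (insert a A) = f (it A)) (A : Finset α) :
    it A = f^[A.card] x₀ := by
  induction A using Finset.induction_on with
  | empty => simpa using h0
  | insert a A ha ih =>
    rw [h1 A a ha, ih, Finset.card_insert_of_notMem ha, Function.iterate_succ_apply']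

theorem standard_iff_orbit_injective {X : Type*} (f : X → X) (x₀ : X)
    (hsurj : Function.Surjective (fun n : ℕ => f^[n] x₀)) :
    (Function.Injective f ∧ x₀ ∉ Set.range f) ↔
      Function.Injective (fun n : ℕ => f^[n] x₀) := by
  constructor
  · rintro ⟨hf, hx⟩ m
    induction m with
    | zero =>
      rintro (_ | n) h
      · rfl
      · exact absurd ⟨f^[n] x₀, by simpa [Function.iterate_succ_apply'] using h.symm⟩ hx
    | succ m ih =>
      rintro (_ | n) h
      · exact absurd ⟨f^[m] x₀, by simpa [Function.iterate_succ_apply'] using h⟩ hx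
      · simp only [Function.iterate_succ_apply'] at h
        rw [ih (hf h)]
  · intro hg
    refine ⟨fun x y hxy => ?_, ?_⟩
    · obtain ⟨m, rfl⟩ := hsurj x
      obtain ⟨n, rfl⟩ := hsurj y
      simp only [← Function.iterate_succ_apply' f] at hxy
      have := hg hxy
      rw [Nat.succ.inj this]
    · rintro ⟨x, hx⟩
      obtain ⟨n, rfl⟩ := hsurj x
      simp only [← Function.iterate_succ_apply' f] at hx
      exact Nat.succ_ne_zero n (hg hx)

/-- A repeated value in the orbit forces `X` to be finite. -/
theorem finite_of_iterate_eq {X : Type*} (f : X → X) (x₀ : X)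
    (hmin : ∀ S : Set X, x₀ ∈ S → (∀ x ∈ S, f x ∈ S) → S = Set.univ)
    {m n : ℕ} (hmn : m < n) (h : f^[m] x₀ = f^[n] x₀) : Finite X := by
  have hS : (fun k : ℕ => f^[k] x₀) '' Set.Iio n = Set.univ := by
    apply hmin
    · exact ⟨0, Nat.zero_lt_of_lt hmn, rfl⟩
    · rintro _ ⟨k, hk, rfl⟩
      rcases Nat.lt_or_ge (k + 1) n with hk' | hk'
      · exact ⟨k + 1, hk', Function.iterate_succ_apply' f k x₀⟩
      -- Here `k + 1 = n`, so the orbit wraps around to index `m`.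
      · have hkn : k + 1 = n := le_antisymm hk hk'
        refine ⟨m, hmn, ?_⟩
        simp only [h, ← hkn, Function.iterate_succ_apply']
  rw [← Set.finite_univ_iff, ← hS]
  exact (Set.finite_Iio n).image _

/-- For a minimal counting system `(X, f, x₀)` with unique iterator `it` on an infinite
type `α`, the following are equivalent: (1) `(X, f, x₀)` is standard; (2) `it` is
complete; (3) every finite set is `it`-regular (proper subsets have different iterator
values); (4) `X` is not a finite type. -/
theorem minimal_tfae {X : Type*} (f : X → X) (x₀ : X)
    (hmin : ∀ S : Set X, x₀ ∈ S → (∀ x ∈ S, f x ∈ S) → S = Set.univ)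
    {α : Type*} [DecidableEq α] [Infinite α] (it : Finset α → X)
    (h0 : it ∅ = x₀)
    (h1 : ∀ (A : Finset α) (a : α), a ∉ A → it (insert a A) = f (it A)) :
    List.TFAE
      [Function.Injective f ∧ x₀ ∉ Set.range f,
       ∀ A B : Finset α, it B = it A → Nonempty (A ≃ B),
       ∀ A B : Finset α, B ⊂ A → it B ≠ it A,
       ¬ Finite X] := by
  have hsurj := orbit_surjective f x₀ hmin
  have hit := iterator_eq_iterate_card f x₀ it h0 h1
  have e1 := standard_iff_orbit_injective f x₀ hsurj
  have e2 : (∀ A B : Finset α, it B = it A → Nonempty (A ≃ B)) ↔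
      Function.Injective (fun n : ℕ => f^[n] x₀) := by
    constructor
    · intro h m n hmn
      obtain ⟨A, rfl⟩ := Infinite.exists_subset_card_eq α m
      obtain ⟨B, rfl⟩ := Infinite.exists_subset_card_eq α n
      obtain ⟨e⟩ := h A B (by rw [hit, hit]; exact hmn.symm)
      exact Finset.card_eq_of_equiv e
    · intro hg A B h
      rw [hit, hit] at h
      exact ⟨Finset.equivOfCardEq (hg h).symm⟩
  have e3 : (∀ A B : Finset α, B ⊂ A → it B ≠ it A) ↔
      Function.Injective (fun n : ℕ => f^[n] x₀) := by
    constructor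
    · intro h
      refine Function.Injective.of_lt_imp_ne fun m n hmn => ?_
      obtain ⟨A, rfl⟩ := Infinite.exists_subset_card_eq α n
      obtain ⟨B, hBA, rfl⟩ := Finset.exists_subset_card_eq hmn.le
      have hne := h A B (hBA.ssubset_of_ne fun hEq => hmn.ne (congrArg Finset.card hEq))
      rwa [hit, hit] at hne
    · intro hg A B hBA h
      rw [hit, hit] at h
      exact (Finset.card_lt_card hBA).ne (hg h)
  have e4 : ¬ Finite X ↔ Function.Injective (fun n : ℕ => f^[n] x₀) := by
    constructor
    · intro h
      exact Function.Injective.of_lt_imp_ne fun m n hmn hEq => h (finite_of_iterate_eq f x₀ hmin hmn hEq)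
    · intro hg hfin
      exact not_injective_infinite_finite _ hg
  rw [← e1] at e2 e3 e4
  tfae_have 1 ↔ 2 := e2.symm
  tfae_have 1 ↔ 3 := e3.symm
  tfae_have 1 ↔ 4 := e4.symm
  tfae_finish
end

section
/- Let (X, f, x₀) be a minimal counting system with X a finite type. Then there exists a unique element z ∈ X such that (X, f, x₀) is z-minimal, i.e., such that the only subset Y ⊆ X containing x₀ with f(Y \ {z}) ⊆ Y is X itself. -/
/-!
By minimality every `x` is `f^[n] x₀` for some `n`; let `k x` be the least such `n`.
For any `z`, the initial segment `{x | k x ≤ k z}` is exactly what is reached from `x₀` when `f` may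
not be applied at `z`. Hence the system is `z`-minimal if and only if `z` maximises `k`. A maximiser
exists since `X` is finite and nonempty, and is unique since `k` is injective.
-/

/-- A minimal counting system `(X, f, x₀)` with `X` a finite type admits a unique
element `z` such that `(X, f, x₀)` is `z`-minimal: the only subset `Y ⊆ X` containing
`x₀` with `f (Y \ {z}) ⊆ Y` is `X` itself. -/
theorem existsUnique_endpoint {X : Type*} [Finite X] (f : X → X) (x₀ : X)
    (hmin : ∀ S : Set X, x₀ ∈ S → (∀ x ∈ S, f x ∈ S) → S = Set.univ) :
    ∃! z : X, ∀ Y : Set X, x₀ ∈ Y →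
      (∀ x ∈ Y \ ({z} : Set X), f x ∈ Y) → Y = Set.univ := by
  classical
  have hreach : ∀ x, ∃ n, f^[n] x₀ = x := by
    have h := hmin {x | ∃ n, f^[n] x₀ = x} ⟨0, rfl⟩ (by
      rintro _ ⟨n, rfl⟩
      exact ⟨n + 1, Function.iterate_succ_apply' f n x₀⟩)
    exact fun x => Set.eq_univ_iff_forall.mp h x
  obtain ⟨k, hk, hle⟩ : ∃ k : X → ℕ, (∀ x, f^[k x] x₀ = x) ∧ ∀ n, k (f^[n] x₀) ≤ n :=
    ⟨fun x => Nat.find (hreach x), fun x => Nat.find_spec (hreach x),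
      fun n => Nat.find_min' (hreach _) rfl⟩
  -- A `z`-minimal system forces `z` to maximise `k`.
  have hmax : ∀ z : X, (∀ Y : Set X, x₀ ∈ Y →
      (∀ x ∈ Y \ ({z} : Set X), f x ∈ Y) → Y = Set.univ) → ∀ x, k x ≤ k z := by
    intro z hz
    have h := hz {x | k x ≤ k z} ((hle 0).trans (Nat.zero_le _)) (by
      rintro x ⟨hx, hxz⟩
      have hx' : k x ≤ k z := hx
      have hne : k x ≠ k z := fun h => hxz (by
        rw [Set.mem_singleton_iff, ← hk x, h, hk z])
      have hs := hle (k x + 1)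
      rw [Function.iterate_succ_apply', hk x] at hs
      change k (f x) ≤ k z
      omega)
    exact fun x => Set.eq_univ_iff_forall.mp h x
  have : Nonempty X := ⟨x₀⟩
  obtain ⟨z, hz⟩ := Finite.exists_max k
  have hzmin : ∀ Y : Set X, x₀ ∈ Y →
      (∀ x ∈ Y \ ({z} : Set X), f x ∈ Y) → Y = Set.univ := by
    intro Y h0 hY
    have hmem : ∀ n, n ≤ k z → f^[n] x₀ ∈ Y := by
      intro n
      induction n with
      | zero => exact fun _ => h0
      | succ n ih =>
        intro hn
        rw [Function.iterate_succ_apply']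
        refine hY _ ⟨ih (by omega), fun h => ?_⟩
        -- The orbit cannot meet `z` before time `k z`.
        have hn' := hle n
        rw [Set.mem_singleton_iff.mp h] at hn'
        omega
    refine Set.eq_univ_of_forall fun x => ?_
    rw [← hk x]
    exact hmem _ (hz x)
  refine ⟨z, hzmin, fun w hw => ?_⟩
  rw [← hk w, le_antisymm (hz w) (hmax w hw z), hk z]
end

section
/- Let (X, f, x₀) be a minimal counting system with X a finite type, and let z be the end-point of (X, f, x₀) (the unique element such that (X, f, x₀) is z-minimal). Then f maps X \ {z} bijectively onto X \ {x₀}: the restriction of f to the complement of {z} is injective, and its image is exactly the complement of {x₀}. -/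
/-- Let `(X, f, x₀)` be a minimal counting system with `X` finite and end-point `z`
(the unique element for which `(X, f, x₀)` is `z`-minimal). Then `f` maps `X \ {z}`
bijectively onto `X \ {x₀}`. -/
theorem endpoint_maps_bijectively {X : Type*} [Finite X] (f : X → X) (x₀ : X)
    (hmin : ∀ S : Set X, x₀ ∈ S → (∀ x ∈ S, f x ∈ S) → S = Set.univ)
    (z : X)
    (hz : ∀ Y : Set X, x₀ ∈ Y →
      (∀ x ∈ Y \ ({z} : Set X), f x ∈ Y) → Y = Set.univ) :
    Set.InjOn f ({z}ᶜ : Set X) ∧ f '' ({z}ᶜ : Set X) = ({x₀}ᶜ : Set X) := by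
  -- `z`-minimality applied to `{x₀} ∪ f(X \ {z})` gives `X \ {x₀} ⊆ f(X \ {z})`; as both
  -- complements have `|X| - 1` elements, counting yields equality and injectivity.
  have hY : insert x₀ (f '' {z}ᶜ) = Set.univ :=
    hz _ (Set.mem_insert _ _) fun x hx => Set.mem_insert_of_mem _ ⟨x, hx.2, rfl⟩
  have hsub : ({x₀}ᶜ : Set X) ⊆ f '' {z}ᶜ := fun y hy =>
    (hY.symm ▸ Set.mem_univ y : y ∈ insert x₀ (f '' {z}ᶜ)).resolve_left hy
  have hcard : ({z}ᶜ : Set X).ncard = ({x₀}ᶜ : Set X).ncard := by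
    have h₁ := Set.ncard_add_ncard_compl ({z} : Set X)
    have h₂ := Set.ncard_add_ncard_compl ({x₀} : Set X)
    rw [Set.ncard_singleton] at h₁ h₂
    omega
  have himage : f '' ({z}ᶜ : Set X) = {x₀}ᶜ :=
    (Set.eq_of_subset_of_ncard_le hsub ((Set.ncard_image_le).trans hcard.le)).symm
  exact ⟨Set.injOn_of_ncard_image_eq (by rw [himage, hcard]), himage⟩
end

section
/- Let (X, f, x₀) be a minimal counting system with X a finite type and let z be its end-point. Then: (1) if f(z) = x₀ then f is bijective (and in particular x₀ is in the range of f); (2) if f(z) ≠ x₀ then f is not injective and x₀ is not in the range of f. -/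
/-!
The range of `f` is invariant, so by minimality `f` is surjective (hence bijective, `X` being
finite) exactly when `x₀ ∈ range f`. If `f z = x₀` this gives the first part. For the second part
it is enough that `z` is the only possible preimage of `x₀`, which is `eq_endpoint_of_map_eq_base`;
then `f` is not surjective, hence not injective.
-/

/-- The base point can only be the image of the end-point. Given `f y = x₀`, let `k` be the first
time the orbit of `x₀` meets `{y, z}`. The orbit segment up to time `k` is closed under `f` away
from `z`, so it is all of `X`; both `y` and `z` then occur in it, and by the choice of `k` both
occur only at time `k`. -/
theorem eq_endpoint_of_map_eq_base {X : Type*} (f : X → X) (x₀ : X)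
    (hmin : ∀ S : Set X, x₀ ∈ S → (∀ x ∈ S, f x ∈ S) → S = Set.univ)
    (z : X)
    (hz : ∀ Y : Set X, x₀ ∈ Y →
      (∀ x ∈ Y \ ({z} : Set X), f x ∈ Y) → Y = Set.univ)
    (y : X) (hy : f y = x₀) : y = z := by
  classical
  have horb : {x | ∃ i : ℕ, f^[i] x₀ = x} = Set.univ := by
    refine hmin _ ⟨0, rfl⟩ ?_
    rintro _ ⟨i, rfl⟩
    exact ⟨i + 1, Function.iterate_succ_apply' f i x₀⟩
  have hex : ∃ k : ℕ, f^[k] x₀ = y ∨ f^[k] x₀ = z := by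
    obtain ⟨k, hk⟩ := Set.eq_univ_iff_forall.mp horb z
    exact ⟨k, Or.inr hk⟩
  obtain ⟨k, hk, hlt⟩ : ∃ k : ℕ, (f^[k] x₀ = y ∨ f^[k] x₀ = z) ∧
      ∀ i < k, ¬ (f^[i] x₀ = y ∨ f^[i] x₀ = z) :=
    ⟨Nat.find hex, Nat.find_spec hex, fun _ hi => Nat.find_min hex hi⟩
  have hseg : {x | ∃ i ≤ k, f^[i] x₀ = x} = Set.univ := by
    refine hz _ ⟨0, Nat.zero_le k, rfl⟩ ?_
    rintro _ ⟨⟨i, hi, rfl⟩, hne⟩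
    rcases hi.lt_or_eq with hi | rfl
    · exact ⟨i + 1, hi, Function.iterate_succ_apply' f i x₀⟩
    · rcases hk with h | h
      · exact ⟨0, Nat.zero_le i, by rw [h, hy]; rfl⟩
      · exact absurd h hne
  obtain ⟨i, hi, hiy⟩ := Set.eq_univ_iff_forall.mp hseg y
  obtain ⟨j, hj, hjz⟩ := Set.eq_univ_iff_forall.mp hseg z
  have hik : i = k := hi.eq_of_not_lt fun h => hlt i h (Or.inl hiy)
  have hjk : j = k := hj.eq_of_not_lt fun h => hlt j h (Or.inr hjz)
  rw [← hiy, ← hjz, hik, hjk]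

/-- Let `(X, f, x₀)` be a minimal counting system with `X` finite and end-point `z`.
If `f z = x₀` then `f` is bijective (so `x₀` is in the range of `f`); if `f z ≠ x₀`
then `f` is not injective and `x₀` is not in the range of `f`. -/
theorem endpoint_image_dichotomy {X : Type*} [Finite X] (f : X → X) (x₀ : X)
    (hmin : ∀ S : Set X, x₀ ∈ S → (∀ x ∈ S, f x ∈ S) → S = Set.univ)
    (z : X)
    (hz : ∀ Y : Set X, x₀ ∈ Y →
      (∀ x ∈ Y \ ({z} : Set X), f x ∈ Y) → Y = Set.univ) :
    (f z = x₀ → Function.Bijective f ∧ x₀ ∈ Set.range f) ∧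
      (f z ≠ x₀ → ¬ Function.Injective f ∧ x₀ ∉ Set.range f) := by
  constructor
  · intro hfz
    have hsurj : Function.Surjective f :=
      Set.range_eq_univ.mp (hmin _ ⟨z, hfz⟩ fun x _ => ⟨x, rfl⟩)
    exact ⟨⟨Finite.injective_iff_surjective.mpr hsurj, hsurj⟩, z, hfz⟩
  · intro hfz
    have hrange : x₀ ∉ Set.range f := by
      rintro ⟨y, hy⟩
      exact hfz (eq_endpoint_of_map_eq_base f x₀ hmin z hz y hy ▸ hy)
    exact ⟨fun hinj => hrange (Finite.injective_iff_surjective.mp hinj x₀), hrange⟩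
end

section
/- Let (X, f, x₀) be a minimal counting system with X a finite type and let z be its end-point. Then f(x) ≠ x for every x ∈ X with x ≠ z; that is, z is the only possible fixed point of f. -/
/-- Let `(X, f, x₀)` be a minimal counting system with `X` finite and end-point `z`.
Then `f x ≠ x` for every `x ≠ z`; that is, `z` is the only possible fixed point of
`f`. -/
theorem endpoint_only_fixed_point {X : Type*} [Finite X] (f : X → X) (x₀ : X)
    (hmin : ∀ S : Set X, x₀ ∈ S → (∀ x ∈ S, f x ∈ S) → S = Set.univ)
    (z : X)
    (hz : ∀ Y : Set X, x₀ ∈ Y →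
      (∀ x ∈ Y \ ({z} : Set X), f x ∈ Y) → Y = Set.univ) :
    ∀ x : X, x ≠ z → f x ≠ x := by
  intro x hxz hfx
  have horbit : {y | ∃ n, f^[n] x₀ = y} = Set.univ := by
    refine hmin _ ⟨0, rfl⟩ ?_
    rintro _ ⟨n, rfl⟩
    exact ⟨n + 1, Function.iterate_succ_apply' f n x₀⟩
  -- The points whose forward orbit meets `z` are closed under `f` away from `z`, hence are
  -- all of `X`; but the forward orbit of a fixed point `x` is just `{x}`.
  have hreach : {y | ∃ n, f^[n] y = z} = Set.univ := by
    refine hz _ (horbit.symm ▸ Set.mem_univ z : z ∈ {y | ∃ n, f^[n] x₀ = y}) ?_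
    rintro y ⟨⟨n, hn⟩, hyz⟩
    cases n with
    | zero => exact absurd hn hyz
    | succ n => exact ⟨n, hn⟩
  obtain ⟨n, hn⟩ : x ∈ {y | ∃ n, f^[n] y = z} := hreach.symm ▸ Set.mem_univ x
  exact hxz ((Function.iterate_fixed hfx n).symm.trans hn)
end

section
/- Let (S, σ, s₀) and (T, τ, t₀) be segments such that there exists a bijection between S and T. Then there exists a unique mapping p : S → T with p(s₀) = t₀ such that τ ∘ p = p ∘ σ; moreover, this unique mapping p is a bijection and maps the end-point of (S, σ, s₀) to the end-point of (T, τ, t₀). -/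
/-! In a minimal counting system every element is an iterate `σ^[n] s₀`. If the system has a fixed
point `z`, the iterates before the first visit to `z` are pairwise distinct and all later ones equal
`z`, so that first visit happens at time `k = |S| - 1`, and `σ^[m] s₀ = σ^[n] s₀` exactly when
`min m k = min n k` (`segment_iterate`). Segments of equal cardinality therefore identify the same
pairs of iterates, so `σ^[n] s₀ ↦ τ^[n] t₀` is a well-defined bijection. It is the only morphism,
since a morphism is determined on iterates, and it sends `σ^[k] s₀ = z` to `τ^[k] t₀ = z'`. -/

theorem exists_iterate_of_minimal {S : Type*} (σ : S → S) (s₀ : S)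
    (hmin : ∀ Y : Set S, s₀ ∈ Y → (∀ x ∈ Y, σ x ∈ Y) → Y = Set.univ) (s : S) :
    ∃ n : ℕ, σ^[n] s₀ = s := by
  have h : Set.range (fun n : ℕ => σ^[n] s₀) = Set.univ := by
    refine hmin _ ⟨0, rfl⟩ ?_
    rintro _ ⟨n, rfl⟩
    exact ⟨n + 1, Function.iterate_succ_apply' σ n s₀⟩
  exact Set.range_eq_univ.1 h s

/-- In a minimal system with fixed point `z`, the orbit of `s₀` first reaches `z` at time `|S| - 1`,
and this determines which iterates coincide. -/
theorem segment_iterate {S : Type*} [Finite S] (σ : S → S) (s₀ : S)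
    (hmin : ∀ Y : Set S, s₀ ∈ Y → (∀ x ∈ Y, σ x ∈ Y) → Y = Set.univ)
    (z : S) (hz : σ z = z) :
    σ^[Nat.card S - 1] s₀ = z ∧ ∀ m n : ℕ, σ^[m] s₀ = σ^[n] s₀ ↔
      min m (Nat.card S - 1) = min n (Nat.card S - 1) := by
  classical
  have hex := exists_iterate_of_minimal σ s₀ hmin z
  obtain ⟨k, hk, hlt⟩ : ∃ k, σ^[k] s₀ = z ∧ ∀ i < k, σ^[i] s₀ ≠ z :=
    ⟨Nat.find hex, Nat.find_spec hex, fun i hi => Nat.find_min hex hi⟩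
  have hcut : ∀ m, σ^[m] s₀ = σ^[min m k] s₀ := by
    intro m
    rcases le_total m k with h | h
    · rw [min_eq_left h]
    · rw [min_eq_right h, hk]
      obtain ⟨d, rfl⟩ := Nat.exists_eq_add_of_le' h
      rw [Function.iterate_add_apply, hk, Function.iterate_fixed hz]
  have hne : ∀ i j, i < j → j ≤ k → σ^[i] s₀ ≠ σ^[j] s₀ := by
    intro i j hij hj he
    -- Applying `σ` another `k - j` times would make the orbit reach `z` before time `k`.
    apply hlt (k - j + i) (by omega)
    rw [Function.iterate_add_apply, he, ← Function.iterate_add_apply, Nat.sub_add_cancel hj, hk]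
  have hiff : ∀ m n : ℕ, σ^[m] s₀ = σ^[n] s₀ ↔ min m k = min n k := by
    intro m n
    refine ⟨fun h => ?_, fun h => by rw [hcut m, hcut n, h]⟩
    rw [hcut m, hcut n] at h
    rcases lt_trichotomy (min m k) (min n k) with h' | h' | h'
    · exact absurd h (hne _ _ h' (min_le_right _ _))
    · exact h'
    · exact absurd h.symm (hne _ _ h' (min_le_right _ _))
  have hcard : Nat.card S = k + 1 := by
    have hb : Function.Bijective (fun i : Fin (k + 1) => σ^[(i : ℕ)] s₀) := by
      refine ⟨fun i j h => ?_, fun s => ?_⟩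
      · have := (hiff i j).1 h
        apply Fin.ext
        omega
      · obtain ⟨n, rfl⟩ := exists_iterate_of_minimal σ s₀ hmin s
        exact ⟨⟨min n k, by omega⟩, (hcut n).symm⟩
    rw [← Nat.card_eq_of_bijective _ hb, Nat.card_fin]
  rw [hcard, Nat.add_sub_cancel]
  exact ⟨hk, hiff⟩

/-- Let `(S, σ, s₀)` and `(T, τ, t₀)` be segments (minimal counting systems on finite
types whose end-points `z`, `z'` are fixed points) with `S ≃ T`. Then there is a unique
map `p : S → T` with `p s₀ = t₀` and `τ ∘ p = p ∘ σ`; moreover this `p` is a bijection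
sending the end-point `z` to the end-point `z'`. -/
theorem segment_unique_morphism {S : Type*} [Finite S] (σ : S → S) (s₀ : S)
    (hSmin : ∀ Y : Set S, s₀ ∈ Y → (∀ x ∈ Y, σ x ∈ Y) → Y = Set.univ)
    (z : S)
    (hSz : ∀ Y : Set S, s₀ ∈ Y → (∀ x ∈ Y \ ({z} : Set S), σ x ∈ Y) → Y = Set.univ)
    (hzfix : σ z = z)
    {T : Type*} [Finite T] (τ : T → T) (t₀ : T)
    (hTmin : ∀ Y : Set T, t₀ ∈ Y → (∀ x ∈ Y, τ x ∈ Y) → Y = Set.univ)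
    (z' : T)
    (hTz : ∀ Y : Set T, t₀ ∈ Y → (∀ x ∈ Y \ ({z'} : Set T), τ x ∈ Y) → Y = Set.univ)
    (hz'fix : τ z' = z')
    (hequiv : Nonempty (S ≃ T)) :
    (∃! p : S → T, p s₀ = t₀ ∧ τ ∘ p = p ∘ σ) ∧
      ∀ p : S → T, (p s₀ = t₀ ∧ τ ∘ p = p ∘ σ) →
        Function.Bijective p ∧ p z = z' := by
  obtain ⟨hz, hS⟩ := segment_iterate σ s₀ hSmin z hzfix
  obtain ⟨hz', hT⟩ := segment_iterate τ t₀ hTmin z' hz'fix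
  obtain ⟨e⟩ := hequiv
  rw [← Nat.card_congr e] at hz' hT
  have hiff : ∀ m n : ℕ, σ^[m] s₀ = σ^[n] s₀ ↔ τ^[m] t₀ = τ^[n] t₀ :=
    fun m n => (hS m n).trans (hT m n).symm
  have hsS := exists_iterate_of_minimal σ s₀ hSmin
  have hsT := exists_iterate_of_minimal τ t₀ hTmin
  have hmor : ∀ p : S → T, (p s₀ = t₀ ∧ τ ∘ p = p ∘ σ) → ∀ n : ℕ, p (σ^[n] s₀) = τ^[n] t₀ := by
    rintro p ⟨h0, hc⟩ n
    have hsemi : Function.Semiconj p σ τ := fun x => (congrFun hc x).symm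
    rw [(hsemi.iterate_right n).eq, h0]
  refine ⟨?_, fun p hp => ⟨⟨fun x y hxy => ?_, fun t => ?_⟩, ?_⟩⟩
  · choose ν hν using hsS
    have hval : ∀ n : ℕ, τ^[ν (σ^[n] s₀)] t₀ = τ^[n] t₀ := fun n => (hiff _ _).1 (hν _)
    refine ⟨fun s => τ^[ν s] t₀, ⟨hval 0, ?_⟩, fun q hq => ?_⟩
    · funext s
      have h := hval (ν s + 1)
      rw [Function.iterate_succ_apply', Function.iterate_succ_apply', hν] at h
      exact h.symm
    · funext s
      have h := hmor q hq (ν s)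
      rwa [hν] at h
  · obtain ⟨m, rfl⟩ := hsS x
    obtain ⟨n, rfl⟩ := hsS y
    rw [hmor p hp, hmor p hp] at hxy
    exact (hiff m n).2 hxy
  · obtain ⟨n, rfl⟩ := hsT t
    exact ⟨σ^[n] s₀, hmor p hp n⟩
  · rw [← hz, hmor p hp, hz']
end

section
/- Let (S, σ, s₀) and (T, τ, t₀) be segments with end-points z and z' respectively. On the disjoint union R = S ⊕ T define ρ : R → R by ρ(inl s) = inl(σ(s)) for s ∈ S with s ≠ z, ρ(inl z) = inr(t₀), and ρ(inr t) = inr(τ(t)) for t ∈ T. Then (R, ρ, inl s₀) is a segment with end-point inr z'. -/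
/-!
Minimality is a special case of minimality relative to the end-point, so only the latter
needs an argument. If `Y` contains `inl s₀` and is closed under `ρ` away from the end-point
of the join, then its preimage in `S` is closed under `σ` away from `z`, hence is all of `S`.
In particular `inl z`, and so `ρ (inl z) = inr t₀`, lies in `Y`; the preimage of `Y` in `T`
is then all of `T` by minimality of `T` relative to its own end-point.
-/

/-- Joining two segments: given segments `(S, σ, s₀)` with end-point `z` and
`(T, τ, t₀)` with end-point `z'`, define `ρ` on the disjoint union `S ⊕ T` by
`ρ (inl s) = inl (σ s)` for `s ≠ z`, `ρ (inl z) = inr t₀`, and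
`ρ (inr t) = inr (τ t)`. Then `(S ⊕ T, ρ, inl s₀)` is a segment with end-point
`inr z'`: it is minimal, it is `inr z'`-minimal, and `inr z'` is a fixed point of
`ρ`. -/
theorem segment_join {S : Type*} [Finite S] (σ : S → S) (s₀ : S)
    (hSmin : ∀ Y : Set S, s₀ ∈ Y → (∀ x ∈ Y, σ x ∈ Y) → Y = Set.univ)
    (z : S)
    (hSz : ∀ Y : Set S, s₀ ∈ Y → (∀ x ∈ Y \ ({z} : Set S), σ x ∈ Y) → Y = Set.univ)
    (hzfix : σ z = z)
    {T : Type*} [Finite T] (τ : T → T) (t₀ : T)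
    (hTmin : ∀ Y : Set T, t₀ ∈ Y → (∀ x ∈ Y, τ x ∈ Y) → Y = Set.univ)
    (z' : T)
    (hTz : ∀ Y : Set T, t₀ ∈ Y → (∀ x ∈ Y \ ({z'} : Set T), τ x ∈ Y) → Y = Set.univ)
    (hz'fix : τ z' = z')
    (ρ : S ⊕ T → S ⊕ T)
    (hρ₁ : ∀ s : S, s ≠ z → ρ (Sum.inl s) = Sum.inl (σ s))
    (hρ₂ : ρ (Sum.inl z) = Sum.inr t₀)
    (hρ₃ : ∀ t : T, ρ (Sum.inr t) = Sum.inr (τ t)) :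
    (∀ Y : Set (S ⊕ T), Sum.inl s₀ ∈ Y → (∀ x ∈ Y, ρ x ∈ Y) → Y = Set.univ) ∧
      (∀ Y : Set (S ⊕ T), Sum.inl s₀ ∈ Y →
        (∀ x ∈ Y \ ({Sum.inr z'} : Set (S ⊕ T)), ρ x ∈ Y) → Y = Set.univ) ∧
      ρ (Sum.inr z') = Sum.inr z' := by
  have key : ∀ Y : Set (S ⊕ T), Sum.inl s₀ ∈ Y →
      (∀ x ∈ Y \ ({Sum.inr z'} : Set (S ⊕ T)), ρ x ∈ Y) → Y = Set.univ := by
    intro Y h0 hY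
    have hS : Sum.inl ⁻¹' Y = (Set.univ : Set S) := by
      refine hSz _ h0 ?_
      rintro s ⟨hs, hsz⟩
      have h := hY (Sum.inl s) ⟨hs, by simp⟩
      rwa [hρ₁ s hsz] at h
    have hinl : ∀ s : S, Sum.inl s ∈ Y := Set.eq_univ_iff_forall.mp hS
    have ht₀ : Sum.inr t₀ ∈ Y := hρ₂ ▸ hY (Sum.inl z) ⟨hinl z, by simp⟩
    have hT : Sum.inr ⁻¹' Y = (Set.univ : Set T) := by
      refine hTz _ ht₀ ?_
      rintro t ⟨ht, htz⟩
      have h := hY (Sum.inr t) ⟨ht, by simpa using htz⟩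
      rwa [hρ₃ t] at h
    have hinr : ∀ t : T, Sum.inr t ∈ Y := Set.eq_univ_iff_forall.mp hT
    exact Set.eq_univ_iff_forall.mpr (Sum.rec hinl hinr)
  exact ⟨fun Y h0 hY => key Y h0 fun x hx => hY x hx.1, key, by rw [hρ₃, hz'fix]⟩
end

section
/- Let (X, f, x₀) be a minimal counting system, α an infinite type, # the unique iterator for (X, f, x₀) on α, and ⊕ the unique binary operation on X satisfying (a0) x ⊕ x₀ = x and (a1) x ⊕ f(x') = f(x ⊕ x'). Then there exists a unique binary operation ⊗ on X satisfying (m0) x ⊗ x₀ = x₀ for all x ∈ X and (m1) x ⊗ f(x') = x ⊕ (x ⊗ x') for all x, x' ∈ X. This operation is associative and commutative, satisfies x ⊗ f(x₀) = x for all x ∈ X (so f(x₀) is a multiplicative unit), satisfies the distributive law x ⊗ (x₁ ⊕ x₂) = (x ⊗ x₁) ⊕ (x ⊗ x₂) for all x, x₁, x₂ ∈ X, and satisfies #(A) ⊗ #(B) = #(C) whenever A, B, C : Finset α are such that there is a bijection between C and the cartesian product A × B. -/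
/-!
By minimality every element of `X` is a numeral `c n = f^[n] x₀`, so `c : ℕ → X` is onto. The
recursion for `⊕` forces `c m ⊕ c n = c (m + n)`, hence the kernel of `c` is a congruence for
addition on `ℕ`, and therefore also for multiplication, which is iterated addition. So
`c m ⊗ c n = c (m * n)` is well defined; the recursion for `⊗` forces this formula, and all the
algebraic laws descend from `ℕ` along `c`. Finally `#(A) = c (card A)`, and `card (A × B)` is the
product of the cardinalities.
-/

/-- Multiplication for a minimal counting system `(X, f, x₀)` with unique iterator `it`
on an infinite type `α`, where `add` is the unique addition (satisfying (a0) and (a1)):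
there is a unique binary operation `⊗` with `x ⊗ x₀ = x₀` and
`x ⊗ f x' = x ⊕ (x ⊗ x')`; it is associative, commutative, has `f x₀` as a unit,
distributes over `⊕`, and satisfies `it A ⊗ it B = it C` whenever `C` is in bijection
with the cartesian product `A ×ˢ B`. -/
theorem minimal_multiplication {X : Type*} (f : X → X) (x₀ : X)
    (hmin : ∀ S : Set X, x₀ ∈ S → (∀ x ∈ S, f x ∈ S) → S = Set.univ)
    {α : Type*} [DecidableEq α] [Infinite α] (it : Finset α → X)
    (h0 : it ∅ = x₀)
    (h1 : ∀ (A : Finset α) (a : α), a ∉ A → it (insert a A) = f (it A))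
    (add : X → X → X)
    (ha0 : ∀ x : X, add x x₀ = x)
    (ha1 : ∀ x x' : X, add x (f x') = f (add x x')) :
    (∃! mul : X → X → X,
      (∀ x : X, mul x x₀ = x₀) ∧
      (∀ x x' : X, mul x (f x') = add x (mul x x'))) ∧
      ∀ mul : X → X → X,
        ((∀ x : X, mul x x₀ = x₀) ∧
          (∀ x x' : X, mul x (f x') = add x (mul x x'))) →
        (∀ x y zz : X, mul (mul x y) zz = mul x (mul y zz)) ∧
        (∀ x y : X, mul x y = mul y x) ∧
        (∀ x : X, mul x (f x₀) = x) ∧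
        (∀ x x₁ x₂ : X, mul x (add x₁ x₂) = add (mul x x₁) (mul x x₂)) ∧
        (∀ (A B : Finset α) (C : Finset α),
          Nonempty (C ≃ (A ×ˢ B : Finset (α × α))) → mul (it A) (it B) = it C) := by
  -- every element is a numeral `f^[n] x₀`
  obtain ⟨c, hc⟩ : ∃ c : ℕ → X, c = fun n => f^[n] x₀ := ⟨_, rfl⟩
  have c0 : c 0 = x₀ := by simp [hc]
  have cs : ∀ n, c (n + 1) = f (c n) := fun n => by
    simp only [hc, Function.iterate_succ_apply']
  have hsurj : Function.Surjective c := by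
    rw [← Set.range_eq_univ]
    refine hmin _ ⟨0, c0⟩ ?_
    rintro _ ⟨n, rfl⟩
    exact ⟨n + 1, cs n⟩
  have hadd : ∀ m n, add (c m) (c n) = c (m + n) := by
    intro m n
    induction n with
    | zero => rw [c0, ha0, Nat.add_zero]
    | succ n ih => rw [cs, ha1, ih, ← Nat.add_assoc, cs]
  have hit : ∀ A : Finset α, it A = c A.card := by
    intro A
    induction A using Finset.induction_on with
    | empty => rw [h0, Finset.card_empty, c0]
    | insert a A ha ih => rw [h1 A a ha, Finset.card_insert_of_notMem ha, cs, ih]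
  have hcongr : ∀ a a' k, c a = c a' → c (k * a) = c (k * a') := by
    intro a a' k h
    induction k with
    | zero => rw [Nat.zero_mul, Nat.zero_mul]
    | succ k ih => rw [Nat.succ_mul, Nat.succ_mul, ← hadd, ← hadd, ih, h]
  have hmul : ∀ mul : X → X → X, ((∀ x : X, mul x x₀ = x₀) ∧
      (∀ x x' : X, mul x (f x') = add x (mul x x'))) →
      ∀ m n, mul (c m) (c n) = c (m * n) := by
    rintro mul ⟨hm0, hm1⟩ m n
    induction n with
    | zero => rw [c0, hm0, Nat.mul_zero, c0]
    | succ n ih => rw [cs, hm1, ih, hadd, Nat.mul_succ, Nat.add_comm]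
  refine ⟨?_, ?_⟩
  · -- `g` picks a numeral for each element; `hcongr` makes the choice immaterial
    obtain ⟨g, hg⟩ := hsurj.hasRightInverse
    refine ⟨fun x y => c (g x * g y), ⟨fun x => ?_, fun x y => ?_⟩, fun mul h => ?_⟩
    · change c (g x * g x₀) = x₀
      rw [hcongr (g x₀) 0 (g x) (by rw [hg, c0]), Nat.mul_zero, c0]
    · change c (g x * g (f y)) = add x (c (g x * g y))
      rw [hcongr (g (f y)) (g y + 1) (g x) (by rw [hg, cs, hg])]
      conv_rhs => rw [← hg x]
      rw [hadd, hg x, Nat.mul_succ, Nat.add_comm]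
    · funext x y
      rw [← hmul mul h, hg, hg]
  · intro mul h
    have H := hmul mul h
    refine ⟨?_, ?_, ?_, ?_, ?_⟩
    · intro x y z
      obtain ⟨a, rfl⟩ := hsurj x
      obtain ⟨b, rfl⟩ := hsurj y
      obtain ⟨d, rfl⟩ := hsurj z
      rw [H, H, H, H, Nat.mul_assoc]
    · intro x y
      obtain ⟨a, rfl⟩ := hsurj x
      obtain ⟨b, rfl⟩ := hsurj y
      rw [H, H, Nat.mul_comm]
    · intro x
      rw [h.2, h.1, ha0]
    · intro x y z
      obtain ⟨a, rfl⟩ := hsurj x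
      obtain ⟨b, rfl⟩ := hsurj y
      obtain ⟨d, rfl⟩ := hsurj z
      rw [hadd, H, H, H, hadd, Nat.mul_add]
    · rintro A B C ⟨e⟩
      have hcard : C.card = A.card * B.card := by
        rw [← Finset.card_product]
        exact Finset.card_eq_of_equiv e
      rw [hit, hit, hit, H, hcard]
end

section
/- Let (X, f, x₀) be a minimal counting system and let ⊕ be the unique binary operation on X satisfying (a0) x ⊕ x₀ = x for all x ∈ X and (a1) x ⊕ f(x') = f(x ⊕ x') for all x, x' ∈ X. Then: (1) every element of X has an additive inverse (for each x ∈ X there exists x' ∈ X with x ⊕ x' = x₀) if and only if f is bijective; (2) the cancellation law holds for ⊕ (x₁ ⊕ x = x₂ ⊕ x implies x₁ = x₂) if and only if f is injective. -/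
/-!
Minimality is the induction principle for `x₀` and `f`. By induction on the second argument,
`add (f x) y = f (add x y)`. If `e'` is an inverse of `f x₀`, then `add (f x) e' = x` by induction
on `x`, so `fun x => add x e'` is a two-sided inverse of `f`. Conversely, if `f` is surjective and
`x'` is an inverse of `x`, any preimage of `x'` under `f` is an inverse of `f x`. Cancellation
is injectivity of all maps `fun z => add z x`; these are the iterates of `f`, and `f` itself is
the one with `x = f x₀`.
-/

/-- Let `(X, f, x₀)` be a minimal counting system and `add` the unique addition
(satisfying (a0) and (a1)). Then every element has an additive inverse iff `f` is
bijective, and the cancellation law holds for `add` iff `f` is injective. -/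
theorem minimal_addition_group_and_cancellation {X : Type*} (f : X → X) (x₀ : X)
    (hmin : ∀ S : Set X, x₀ ∈ S → (∀ x ∈ S, f x ∈ S) → S = Set.univ)
    (add : X → X → X)
    (ha0 : ∀ x : X, add x x₀ = x)
    (ha1 : ∀ x x' : X, add x (f x') = f (add x x')) :
    ((∀ x : X, ∃ x' : X, add x x' = x₀) ↔ Function.Bijective f) ∧
      ((∀ x₁ x₂ x : X, add x₁ x = add x₂ x → x₁ = x₂) ↔ Function.Injective f) := by
  have ind : ∀ p : X → Prop, p x₀ → (∀ x, p x → p (f x)) → ∀ x, p x := fun p h0 hs x => by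
    have h := hmin {x | p x} h0 hs
    exact (Set.ext_iff.1 h x).2 trivial
  have succ_add : ∀ x y, add (f x) y = f (add x y) := fun x =>
    ind _ (by rw [ha0, ha0]) fun y hy => by rw [ha1, ha1, hy]
  refine ⟨⟨fun h => ?_, fun hf => ?_⟩, fun h a b hab => ?_, fun hf a b => ?_⟩
  · obtain ⟨e', he'⟩ := h (f x₀)
    have key : ∀ x, add (f x) e' = x := ind _ he' fun x hx => by rw [succ_add, hx]
    refine ⟨fun a b hab => ?_, fun a => ⟨add a e', ?_⟩⟩
    · rw [← key a, hab, key]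
    · rw [← succ_add, key]
  · refine ind _ ⟨x₀, ha0 x₀⟩ ?_
    rintro x ⟨x', hx'⟩
    obtain ⟨y, rfl⟩ := hf.surjective x'
    exact ⟨y, by rw [succ_add, ← ha1, hx']⟩
  · apply h a b (f x₀)
    rw [ha1, ha1, ha0, ha0, hab]
  · refine ind _ (fun h => ?_) fun x ih h => ?_
    · rwa [ha0, ha0] at h
    · rw [ha1, ha1] at h
      exact ih (hf h)
end
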